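/- Let F₀ = ℚ(√5), u = (1+√5)/2, and λ ∈ O_{F₀} irreducible, totally positive, coprime to 2√5, with u₀λ ≡ −1 mod 4·O_{F₀} for some totally positive unit u₀. Then (−1/λ) = 1, (u/λ) = −1, and (u^τ/λ) = −1, where τ generates Gal(F₀/ℚ). -/

import Mathlib

open NumberField

/-! Identify `𝓞 F₀` with `ℤ[ω]`, `ω ^ 2 = 1 + ω`, the conjugate of `u` serving as well as `u` itself
in the role of `ω`. Scaling by `u₀`, assume `λ ≡ -1` modulo `4`; total positivity gives `N λ > 0`
and, since `ω` and its conjugate have opposite signs, `re λ > 0`.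

If `λ` is irreducible, it is prime because `𝓞 F₀` is principal (Minkowski's bound, as the
discriminant is `5 < π ^ 2`), so its residue field has `N λ ≡ 1` modulo `4` elements and `-1` is a
square in it.

For `u`, write `λ = g (c + d ω)` with `c`, `d` coprime and `g > 0`. If `g ≡ 3` modulo `4`, then `u`
is not even a square modulo `g`. Otherwise `c ≡ 3` and `d ≡ 0` modulo `4`, and in `ℤ[ω] / (c + d ω)
≃ ZMod n`, `n = c ^ 2 + c d - d ^ 2`, the class of `ω` is `-c / d`. It is not a square, because by
quadratic reciprocity `J(-c d | n) = J(c | n) = J(n | c) = J(-d ^ 2 | c) = -1`. -/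

open scoped NumberTheorySymbols QuadraticAlgebra

lemma jacobiSym_eq_one_of_modEq_sq {a : ℤ} {c n : ℕ} (hn : Odd n) (hac : a.gcd c = 1)
    (h : n ≡ c ^ 2 [ZMOD 4 * a]) : J(a | n) = 1 := by
  have hmod : n ≡ c ^ 2 [MOD 4 * a.natAbs] := by
    rw [← Int.natCast_modEq_iff, Int.modEq_iff_dvd]
    push_cast
    rw [show (4 : ℤ) * |a| = |4 * a| by simp [abs_mul], abs_dvd]
    exact_mod_cast h.dvd
  have hmod_two : n ≡ c ^ 2 [MOD 2] := hmod.of_dvd ⟨2 * a.natAbs, by ring⟩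
  have hc : Odd (c ^ 2) := Nat.odd_iff.2 (Eq.trans hmod_two.symm (Nat.odd_iff.1 hn))
  rw [jacobiSym.mod_right a hn, hmod, ← jacobiSym.mod_right a hc, jacobiSym.pow_right,
    jacobiSym.sq_one hac]

lemma jacobiSym_neg_mul_eq_neg_one {c n : ℕ} {d : ℤ} (hcd : IsCoprime (c : ℤ) d)
    (hc : c % 4 = 3) (hd : 4 ∣ d) (hn : (n : ℤ) = c ^ 2 + c * d - d ^ 2) :
    J(-(c * d) | n) = -1 := by
  obtain ⟨e, rfl⟩ := hd
  have hc_odd : Odd c := by rw [Nat.odd_iff]; omega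
  have hnc : n ≡ c ^ 2 [ZMOD 4 * e] := by
    rw [hn, Int.modEq_iff_dvd]
    exact ⟨4 * e - c, by ring⟩
  have hn4 : n % 4 = 1 := by
    have hc4 : (c : ℤ) ≡ 3 [ZMOD 4] := by unfold Int.ModEq; omega
    have : n ≡ 3 ^ 2 [ZMOD 4] := (hnc.of_dvd (dvd_mul_right 4 e)).trans (hc4.pow 2)
    unfold Int.ModEq at this
    omega
  have hn_odd : Odd n := by rw [Nat.odd_iff]; omega
  have h_neg_one : J(-1 | n) = 1 := by
    rw [jacobiSym.at_neg_one hn_odd, ZMod.χ₄_nat_one_mod_four hn4]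
  have h_c : J(c | n) = -1 := calc
    J(c | n) = J(n | c) := (jacobiSym.quadratic_reciprocity_one_mod_four hn4 hc_odd).symm
    _ = J(-1 * (4 * e) ^ 2 | c) := jacobiSym.mod_left' <| Int.modEq_iff_dvd.2
      ⟨-(c + 4 * e), by rw [hn]; ring⟩
    _ = -1 := by
      rw [jacobiSym.mul_left, jacobiSym.at_neg_one hc_odd, ZMod.χ₄_nat_three_mod_four hc,
        jacobiSym.sq_one' (Int.isCoprime_iff_gcd_eq_one.1 hcd.symm), mul_one]
  have h_d : J(4 * e | n) = 1 := by
    rw [jacobiSym.mul_left, jacobiSym.at_four hn_odd, one_mul]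
    exact jacobiSym_eq_one_of_modEq_sq hn_odd
      (Int.isCoprime_iff_gcd_eq_one.1 hcd.of_mul_right_right.symm) hnc
  rw [← neg_one_mul, jacobiSym.mul_left, jacobiSym.mul_left, h_neg_one, h_c, h_d]
  norm_num

section QuadraticAlgebra

variable {R : Type*} [CommRing R] {a b : R}

lemma algebraNorm_quadraticAlgebra (z : QuadraticAlgebra R a b) : Algebra.norm R z = z.norm :=
  QuadraticAlgebra.det_toLinearMap_eq_norm z

lemma coe_quadraticAlgebra_basis : ⇑(QuadraticAlgebra.basis a b) = ![1, ω] := by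
  ext i <;> fin_cases i <;> simp [QuadraticAlgebra.basis]

lemma algebraTrace_quadraticAlgebra (z : QuadraticAlgebra R a b) :
    Algebra.trace R _ z = z.trace := by
  rw [Algebra.trace_eq_matrix_trace (QuadraticAlgebra.basis a b), Matrix.trace_fin_two]
  simp only [Algebra.leftMulMatrix_eq_repr_mul, coe_quadraticAlgebra_basis,
    Matrix.cons_val_zero, mul_one, QuadraticAlgebra.basis_repr_apply, Matrix.cons_val_one,
    Matrix.cons_val_fin_one, QuadraticAlgebra.re_mul, QuadraticAlgebra.omega_re, mul_zero,
    QuadraticAlgebra.omega_im, zero_add, QuadraticAlgebra.im_mul, add_zero,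
    QuadraticAlgebra.trace_def]
  ring

lemma discr_quadraticAlgebra_basis :
    Algebra.discr R (QuadraticAlgebra.basis a b) = b ^ 2 + 4 * a := by
  rw [Algebra.discr_def, Matrix.det_fin_two]
  simp only [coe_quadraticAlgebra_basis, Algebra.traceMatrix_apply, Matrix.cons_val_zero,
    Algebra.traceForm_apply, mul_one, algebraTrace_quadraticAlgebra, QuadraticAlgebra.trace_def,
    QuadraticAlgebra.re_one, QuadraticAlgebra.im_one, mul_zero, add_zero, Matrix.cons_val_one,
    Matrix.cons_val_fin_one, QuadraticAlgebra.re_mul, QuadraticAlgebra.omega_re,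
    QuadraticAlgebra.omega_im, zero_add, QuadraticAlgebra.im_mul, one_mul]
  ring

lemma quadraticAlgebra_dvd_norm_sub_norm {r : R} {x y : QuadraticAlgebra R a b}
    (h : algebraMap R _ r ∣ x - y) : r ∣ x.norm - y.norm := by
  obtain ⟨w, hw⟩ := h
  obtain rfl := eq_add_of_sub_eq' hw
  refine ⟨w.re * (r * w.re + 2 * y.re) + b * (w.re * y.im + w.im * y.re + r * w.re * w.im)
    - a * w.im * (r * w.im + 2 * y.im), ?_⟩
  simp only [QuadraticAlgebra.norm_def, QuadraticAlgebra.re_add, QuadraticAlgebra.re_mul,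
    QuadraticAlgebra.algebraMap_re, QuadraticAlgebra.algebraMap_im, mul_zero, zero_mul, add_zero,
    QuadraticAlgebra.im_add, QuadraticAlgebra.im_mul]
  ring

variable {S : Type*} [CommRing S] [Algebra R S] {z x : QuadraticAlgebra R a b}

lemma quadraticAlgebra_algHom_apply (g : QuadraticAlgebra R a b →ₐ[R] S)
    (z : QuadraticAlgebra R a b) :
    g z = algebraMap R S z.re + algebraMap R S z.im * g ω := by
  conv_lhs => rw [← QuadraticAlgebra.mk_eta z, QuadraticAlgebra.mk_eq_add_smul_omega]
  rw [map_add, map_smul, AlgHom.commutes, Algebra.smul_def]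

lemma quadraticAlgebra_lift_omega (u : {u : S // u * u = a • (1 : S) + b • u}) :
    QuadraticAlgebra.lift u ω = (u : S) := by
  simp only [QuadraticAlgebra.lift_apply_apply, QuadraticAlgebra.omega_re, zero_smul,
    QuadraticAlgebra.omega_im, one_smul, zero_add]

lemma exists_quadraticAlgebra_algHom_apply_eq_zero (hz : IsCoprime z.re z.im)
    (hS : algebraMap R S z.norm = 0) :
    ∃ ψ : QuadraticAlgebra R a b →ₐ[R] S, ψ z = 0 := by
  set c := algebraMap R S z.re with hc
  set d := algebraMap R S z.im with hd
  have hnorm : c * c + algebraMap R S b * c * d - algebraMap R S a * d * d = 0 := by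
    simpa [QuadraticAlgebra.norm_def] using hS
  have hcd : IsCoprime (c ^ 2) d := (hz.map (algebraMap R S)).pow_left
  have hd_unit : IsUnit d := hcd.isUnit_of_dvd'
    ⟨algebraMap R S a * d - algebraMap R S b * c, by linear_combination hnorm⟩ dvd_rfl
  obtain ⟨d', hd'⟩ := hd_unit.exists_left_inv
  refine ⟨QuadraticAlgebra.lift ⟨-(d' * c), ?_⟩, ?_⟩
  · simp only [Algebra.smul_def]
    linear_combination d' ^ 2 * hnorm
      + (algebraMap R S a * (d' * d + 1) - algebraMap R S b * c * d') * hd'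
  · rw [quadraticAlgebra_algHom_apply, ← hc, ← hd, quadraticAlgebra_lift_omega]
    linear_combination (-c) * hd'

lemma isSquare_algebraMap_neg_re_mul_im (hz : IsCoprime z.re z.im)
    (hS : algebraMap R S z.norm = 0) (h : z ∣ x ^ 2 - ω) :
    IsSquare (algebraMap R S (-(z.re * z.im))) := by
  obtain ⟨ψ, hψz⟩ := exists_quadraticAlgebra_algHom_apply_eq_zero hz hS
  have hψω : algebraMap R S z.re + algebraMap R S z.im * ψ ω = 0 := by
    rw [← quadraticAlgebra_algHom_apply, hψz]
  have hψx : ψ x ^ 2 = ψ ω := by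
    simpa [hψz, sub_eq_zero] using map_dvd ψ h
  refine ⟨algebraMap R S z.im * ψ x, ?_⟩
  rw [map_neg, map_mul]
  linear_combination (-algebraMap R S z.im ^ 2) * hψx - algebraMap R S z.im * hψω

end QuadraticAlgebra

/-- The ring `ℤ[u]` of integers of `ℚ(√5)`, where `u ^ 2 = 1 + u`; the generator `u` is `ω`. -/
abbrev GoldenInt : Type := QuadraticAlgebra ℤ 1 1

namespace GoldenInt

variable {l : GoldenInt}

lemma norm_eq (l : GoldenInt) : l.norm = l.re ^ 2 + l.re * l.im - l.im ^ 2 := by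
  rw [QuadraticAlgebra.norm_def]
  ring

lemma norm_modEq_one_of_four_dvd_add_one (h : 4 ∣ l + 1) : l.norm ≡ 1 [ZMOD 4] := by
  have : (4 : ℤ) ∣ l.norm - (-1 : GoldenInt).norm :=
    quadraticAlgebra_dvd_norm_sub_norm (by simpa using h)
  rw [QuadraticAlgebra.norm_neg, map_one] at this
  exact (Int.modEq_iff_dvd.2 this).symm

lemma re_mod_four_eq_three_and_four_dvd_im (h : 4 ∣ l + 1) : l.re % 4 = 3 ∧ 4 ∣ l.im := by
  have h4 : algebraMap ℤ GoldenInt 4 ∣ l + 1 := by simpa using h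
  obtain ⟨hre, him⟩ := QuadraticAlgebra.algebraMap_dvd_iff.1 h4
  rw [QuadraticAlgebra.re_add, QuadraticAlgebra.re_one] at hre
  rw [QuadraticAlgebra.im_add, QuadraticAlgebra.im_one, add_zero] at him
  exact ⟨by omega, him⟩

lemma not_dvd_sq_sub_omega_of_isCoprime (hl : IsCoprime l.re l.im) (hre : 0 < l.re)
    (hnorm : 0 < l.norm) (h4 : 4 ∣ l + 1) (x : GoldenInt) : ¬ l ∣ x ^ 2 - ω := by
  intro hx
  obtain ⟨hre4, him4⟩ := re_mod_four_eq_three_and_four_dvd_im h4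
  obtain ⟨c, hc⟩ := Int.eq_ofNat_of_zero_le hre.le
  obtain ⟨n, hn⟩ := Int.eq_ofNat_of_zero_le hnorm.le
  have h_jacobi : J(-(l.re * l.im) | n) = -1 := by
    rw [hc] at hl ⊢
    refine jacobiSym_neg_mul_eq_neg_one hl (by omega) him4 ?_
    rw [← hn, norm_eq, hc]
  refine ZMod.nonsquare_of_jacobiSym_eq_neg_one h_jacobi ?_
  simpa using isSquare_algebraMap_neg_re_mul_im (S := ZMod n) hl (by simp [hn]) hx

-- Since `ω` has norm `-1`, a square root of `ω` modulo `g` would give one of `-1` in `ZMod g`.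
lemma not_natCast_dvd_sq_sub_omega {g : ℕ} (hg : g % 4 = 3) (x : GoldenInt) :
    ¬ (g : GoldenInt) ∣ x ^ 2 - ω := by
  intro hx
  have hω : (ω : GoldenInt).norm = -1 := by simp [norm_eq]
  have hdvd : (g : ℤ) ∣ x.norm ^ 2 + 1 := by
    have := quadraticAlgebra_dvd_norm_sub_norm (r := (g : ℤ)) (by simpa using hx)
    rwa [map_pow, hω, sub_neg_eq_add] at this
  have h_jacobi : J(-1 | g) = -1 := by
    rw [jacobiSym.at_neg_one (Nat.odd_iff.2 (by omega)), ZMod.χ₄_nat_three_mod_four hg]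
  refine ZMod.nonsquare_of_jacobiSym_eq_neg_one h_jacobi ⟨(x.norm : ZMod g), ?_⟩
  rw [← ZMod.intCast_zmod_eq_zero_iff_dvd] at hdvd
  push_cast at hdvd ⊢
  linear_combination -hdvd

lemma not_dvd_sq_sub_omega (hre : 0 < l.re) (hnorm : 0 < l.norm) (h4 : 4 ∣ l + 1)
    (x : GoldenInt) : ¬ l ∣ x ^ 2 - ω := by
  intro hx
  obtain ⟨g, c, d, -, hcd, hc, hd⟩ :=
    Int.exists_gcd_one' (Int.gcd_pos_of_ne_zero_left l.im hre.ne')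
  set p : GoldenInt := ⟨c, d⟩ with hp
  have hl : l = g * p := by ext <;> simp [hp, hc, hd, mul_comm]
  have hl_norm : l.norm = g ^ 2 * p.norm := by rw [hl, map_mul, QuadraticAlgebra.norm_natCast]
  have hg_odd : Odd g := by
    have h_odd : Odd l.norm := by
      have := norm_modEq_one_of_four_dvd_add_one h4
      rw [Int.odd_iff]
      unfold Int.ModEq at this
      omega
    rw [hl_norm, Int.odd_mul, Int.odd_pow' two_ne_zero, Int.odd_coe_nat] at h_odd
    exact h_odd.1
  rcases Nat.odd_mod_four_iff.1 (Nat.odd_iff.1 hg_odd) with hg | hg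
  · have hg4 : (4 : GoldenInt) ∣ g - 1 := by
      obtain ⟨k, rfl⟩ : ∃ k, g = 4 * k + 1 := ⟨g / 4, by omega⟩
      exact ⟨k, by push_cast; ring⟩
    have hp4 : 4 ∣ p + 1 := by
      have := dvd_sub h4 (hg4.mul_right p)
      rwa [hl, show (g * p + 1 - (g - 1) * p : GoldenInt) = p + 1 by ring] at this
    have hc_pos : 0 < c := pos_of_mul_pos_left (hc ▸ hre) (Int.natCast_nonneg g)
    have hp_norm : 0 < p.norm := pos_of_mul_pos_right (hl_norm ▸ hnorm) (sq_nonneg _)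
    exact not_dvd_sq_sub_omega_of_isCoprime (l := p) (Int.isCoprime_iff_gcd_eq_one.2 hcd)
      hc_pos hp_norm hp4 x ((Dvd.intro_left _ hl.symm).trans hx)
  · exact not_natCast_dvd_sq_sub_omega hg x ((Dvd.intro _ hl.symm).trans hx)

lemma re_pos_of_conj_pos (h : 0 < l.re + l.im * Real.goldenRatio)
    (h' : 0 < l.re + l.im * Real.goldenConj) : 0 < l.re := by
  have hφ := Real.goldenRatio_pos
  have hψ := Real.goldenConj_neg
  have hre : l.re * (Real.goldenRatio - Real.goldenConj) =
      (l.re + l.im * Real.goldenConj) * Real.goldenRatio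
        + (l.re + l.im * Real.goldenRatio) * -Real.goldenConj := by ring
  have hpos : 0 < l.re * (Real.goldenRatio - Real.goldenConj) :=
    hre ▸ add_pos (mul_pos h' hφ) (mul_pos h (neg_pos.2 hψ))
  exact Int.cast_pos.1 (pos_of_mul_pos_left hpos (by linarith))

lemma norm_pos_of_conj_pos (h : 0 < l.re + l.im * Real.goldenRatio)
    (h' : 0 < l.re + l.im * Real.goldenConj) : 0 < l.norm := by
  have hnorm : (l.norm : ℝ) =
      (l.re + l.im * Real.goldenRatio) * (l.re + l.im * Real.goldenConj) := by
    rw [norm_eq]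
    push_cast
    linear_combination (-(l.re * l.im : ℝ)) * Real.goldenRatio_add_goldenConj
      - (l.im : ℝ) ^ 2 * Real.goldenRatio_mul_goldenConj
  rw [← Int.cast_pos (R := ℝ), hnorm]
  exact mul_pos h h'

end GoldenInt

lemma exists_dvd_sq_add_one_of_prime {S : Type*} [CommRing S] [IsDedekindDomain S]
    [Module.Free ℤ S] [Module.Finite ℤ S] {p : S} (hp : Prime p)
    (h : (Algebra.norm ℤ p).natAbs % 4 ≠ 3) : ∃ x, p ∣ x ^ 2 + 1 := by
  set I := Ideal.span {p} with hI
  have hI_ne_bot : I ≠ ⊥ := by simpa [hI] using hp.ne_zero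
  have hI_prime : I.IsPrime := (Ideal.span_singleton_prime hp.ne_zero).2 hp
  have hI_max : I.IsMaximal := hI_prime.isMaximal hI_ne_bot
  let : Field (S ⧸ I) := Ideal.Quotient.field I
  let : Finite (S ⧸ I) := Ideal.finiteQuotientOfFreeOfNeBot I hI_ne_bot
  let : Fintype (S ⧸ I) := Fintype.ofFinite _
  have hcard : Fintype.card (S ⧸ I) = (Algebra.norm ℤ p).natAbs := by
    rw [← Ideal.absNorm_span_singleton, Ideal.absNorm_apply, Submodule.cardQuot_apply,
      Nat.card_eq_fintype_card]
  obtain ⟨y, hy⟩ := FiniteField.isSquare_neg_one_iff.2 (hcard ▸ h)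
  obtain ⟨x, rfl⟩ := Ideal.Quotient.mk_surjective y
  refine ⟨x, Ideal.mem_span_singleton.1 (Ideal.Quotient.eq_zero_iff_mem.1 ?_)⟩
  rw [map_add, map_pow, map_one, sq, ← hy, neg_add_cancel]

lemma exists_quadraticAlgebra_algEquiv {F K : Type*} [Field F] [Field K] [Algebra F K] {a b : F}
    (hirr : ∀ r : F, r ^ 2 ≠ a + b * r) {θ : K}
    (hθ : θ * θ = a • (1 : K) + b • θ) (hgen : IntermediateField.adjoin F {θ} = ⊤) :
    ∃ f : QuadraticAlgebra F a b ≃ₐ[F] K, f ω = θ := by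
  have : Fact (∀ r : F, r ^ 2 ≠ a + b * r) := ⟨hirr⟩
  let f : QuadraticAlgebra F a b →ₐ[F] K := QuadraticAlgebra.lift ⟨θ, hθ⟩
  have hfω : f ω = θ := by simp [f]
  have hf_surj : Function.Surjective f := by
    rw [← AlgHom.fieldRange_eq_top, eq_top_iff, ← hgen, IntermediateField.adjoin_simple_le_iff]
    exact ⟨ω, hfω⟩
  exact ⟨AlgEquiv.ofBijective f ⟨f.injective, hf_surj⟩, hfω⟩

lemma exists_int_eq_of_squarefree_mul_sq {d m : ℤ} (hd : Squarefree d) {s : ℚ}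
    (h : d * s ^ 2 = m) : ∃ k : ℤ, s = k := by
  have hint : IsIntegral ℤ (d * s) := by
    refine IsIntegral.of_pow two_pos ?_
    rw [show (d * s) ^ 2 = ((d * m : ℤ) : ℚ) by push_cast; rw [← h]; ring]
    exact isIntegral_algebraMap
  obtain ⟨k, hk : (k : ℚ) = d * s⟩ := IsIntegrallyClosed.isIntegral_iff.1 hint
  have hk_sq : k ^ 2 = d * m := by
    have : (k : ℚ) ^ 2 = d * m := by rw [hk, ← h]; ring
    exact_mod_cast this
  obtain ⟨j, rfl⟩ := (hd.dvd_pow_iff_dvd two_ne_zero).1 ⟨m, hk_sq⟩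
  refine ⟨j, mul_left_cancel₀ (Int.cast_ne_zero.2 hd.ne_zero) ?_⟩
  rw [← hk, Int.cast_mul]

lemma sq_ne_add_one_mul_of_squarefree {a : ℤ} (ha : Squarefree (1 + 4 * a)) (ha0 : a ≠ 0)
    (r : ℚ) : r ^ 2 ≠ a + 1 * r := by
  intro hr
  obtain ⟨k, hk⟩ := exists_int_eq_of_squarefree_mul_sq (m := 1 + 4 * a) squarefree_one
    (s := 2 * r - 1) (by push_cast; linear_combination 4 * hr)
  have hk_sq : k * k = 1 + 4 * a := by
    have : (k : ℚ) * k = 1 + 4 * a := by rw [← hk]; linear_combination 4 * hr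
    exact_mod_cast this
  have := Int.isUnit_mul_self (ha k hk_sq.dvd)
  omega

lemma exists_re_eq_im_eq_of_isIntegral {a : ℤ} (ha : Squarefree (1 + 4 * a)) (ha0 : a ≠ 0)
    {z : QuadraticAlgebra ℚ (a : ℚ) 1} (hz : IsIntegral ℤ z) :
    ∃ m n : ℤ, z.re = m ∧ z.im = n := by
  have : Fact (∀ r : ℚ, r ^ 2 ≠ a + 1 * r) := ⟨sq_ne_add_one_mul_of_squarefree ha ha0⟩
  obtain ⟨t, ht : (t : ℚ) = _⟩ :=
    IsIntegrallyClosed.isIntegral_iff.1 (Algebra.isIntegral_trace (L := ℚ) hz)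
  obtain ⟨ν, hν : (ν : ℚ) = _⟩ :=
    IsIntegrallyClosed.isIntegral_iff.1 (Algebra.isIntegral_norm ℚ hz)
  replace ht : (t : ℚ) = 2 * z.re + 1 * z.im := ht.trans (algebraTrace_quadraticAlgebra z)
  replace hν : (ν : ℚ) = z.re * z.re + 1 * z.re * z.im - a * z.im * z.im :=
    hν.trans (algebraNorm_quadraticAlgebra z)
  obtain ⟨n, hn⟩ := exists_int_eq_of_squarefree_mul_sq (m := t ^ 2 - 4 * ν) ha (s := z.im) (by
    push_cast
    rw [ht, hν]
    ring)
  have hdisc : t ^ 2 - (1 + 4 * a) * n ^ 2 = 4 * ν := by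
    have : (t : ℚ) ^ 2 - (1 + 4 * a) * n ^ 2 = 4 * ν := by rw [ht, hν, ← hn]; ring
    exact_mod_cast this
  have hparity : Even (t - n) := by
    have : Even ((t - n) * (t + n)) := ⟨2 * ν + 2 * a * n ^ 2, by linear_combination hdisc⟩
    rcases Int.even_mul.1 this with h | h
    · exact h
    · simpa [parity_simps] using h
  obtain ⟨m, hm⟩ := hparity
  refine ⟨m, n, ?_, hn⟩
  have hm' : (t : ℚ) - n = m + m := by exact_mod_cast hm
  linear_combination (hm' - ht - hn) / 2

lemma exists_algEquiv_ringOfIntegers {K : Type*} [Field K] [CharZero K] {a : ℤ}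
    (ha : Squarefree (1 + 4 * a)) (ha0 : a ≠ 0) {θ : 𝓞 K} (hθ : θ * θ = a + θ)
    (hgen : IntermediateField.adjoin ℚ {(θ : K)} = ⊤) :
    ∃ e : QuadraticAlgebra ℤ a 1 ≃ₐ[ℤ] 𝓞 K, e ω = θ := by
  have hθK : (θ : K) * θ = (a : ℚ) • (1 : K) + (1 : ℚ) • (θ : K) := by
    simpa [Algebra.smul_def] using congrArg (algebraMap (𝓞 K) K) hθ
  obtain ⟨f, hfω⟩ := exists_quadraticAlgebra_algEquiv
    (sq_ne_add_one_mul_of_squarefree ha ha0) hθK hgen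
  let g : QuadraticAlgebra ℤ a 1 →ₐ[ℤ] 𝓞 K :=
    QuadraticAlgebra.lift ⟨θ, by simpa [Algebra.smul_def] using hθ⟩
  have hgω : g ω = θ := quadraticAlgebra_lift_omega _
  have hgf (z : QuadraticAlgebra ℤ a 1) :
      algebraMap (𝓞 K) K (g z) = f ⟨(z.re : ℚ), (z.im : ℚ)⟩ := by
    have hf := quadraticAlgebra_algHom_apply (f : QuadraticAlgebra ℚ (a : ℚ) 1 →ₐ[ℚ] K)
      ⟨(z.re : ℚ), (z.im : ℚ)⟩
    rw [AlgEquiv.coe_toAlgHom, hfω] at hf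
    rw [quadraticAlgebra_algHom_apply g, hgω, hf]
    simp
  refine ⟨AlgEquiv.ofBijective g ⟨fun x y hxy ↦ ?_, fun y ↦ ?_⟩, hgω⟩
  · have := f.injective (by rw [← hgf, ← hgf, hxy] :
      f ⟨(x.re : ℚ), (x.im : ℚ)⟩ = f ⟨(y.re : ℚ), (y.im : ℚ)⟩)
    simpa [QuadraticAlgebra.ext_iff] using this
  · have hy : IsIntegral ℤ (f.symm y) :=
      (RingOfIntegers.isIntegral_coe y).map (f.symm.toAlgHom.restrictScalars ℤ)
    obtain ⟨m, n, hm, hn⟩ := exists_re_eq_im_eq_of_isIntegral ha ha0 hy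
    refine ⟨⟨m, n⟩, RingOfIntegers.coe_injective ?_⟩
    rw [hgf, ← hm, ← hn, QuadraticAlgebra.mk_eta, AlgEquiv.apply_symm_apply]

lemma exists_ringHom_apply_eq {K A : Type*} [Field K] [CharZero K] [CommRing A] [Algebra ℚ A]
    {a : ℤ} (ha : Squarefree (1 + 4 * a)) (ha0 : a ≠ 0) {θ : K} (hθ : θ * θ = a + θ)
    (hgen : IntermediateField.adjoin ℚ {θ} = ⊤) {x : A} (hx : x * x = a + x) :
    ∃ φ : K →+* A, φ θ = x := by
  obtain ⟨f, hfω⟩ := exists_quadraticAlgebra_algEquiv (b := (1 : ℚ))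
    (sq_ne_add_one_mul_of_squarefree ha ha0) (by simpa [Algebra.smul_def] using hθ) hgen
  let g : QuadraticAlgebra ℚ (a : ℚ) 1 →ₐ[ℚ] A :=
    QuadraticAlgebra.lift ⟨x, by simpa [Algebra.smul_def] using hx⟩
  refine ⟨(g.comp f.symm.toAlgHom).toRingHom, ?_⟩
  change g (f.symm θ) = x
  rw [← hfω, AlgEquiv.symm_apply_apply]
  exact quadraticAlgebra_lift_omega _

lemma discr_eq_of_quadraticAlgebra_algEquiv {K : Type*} [Field K] [NumberField K] {a b : ℤ}
    (e : QuadraticAlgebra ℤ a b ≃ₐ[ℤ] 𝓞 K) : discr K = b ^ 2 + 4 * a := by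
  rw [← discr_eq_discr K ((QuadraticAlgebra.basis a b).map e.toLinearEquiv),
    ← discr_quadraticAlgebra_basis, Algebra.discr_eq_discr_of_algEquiv _ e]
  rfl

lemma isPrincipalIdealRing_of_finrank_eq_two_of_abs_discr_lt {K : Type*} [Field K]
    [NumberField K] (hK : Module.finrank ℚ K = 2) (hdisc : |discr K| < Real.pi ^ 2) :
    IsPrincipalIdealRing (𝓞 K) := by
  have hcomplex : InfinitePlace.nrComplexPlaces K ≤ 1 := by
    have := InfinitePlace.card_add_two_mul_card_eq_rank K
    omega
  have hpi : Real.pi / 4 ≤ (Real.pi / 4) ^ InfinitePlace.nrComplexPlaces K := by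
    simpa only [pow_one] using pow_le_pow_of_le_one (by positivity)
      (by linarith [Real.pi_le_four]) hcomplex
  refine RingOfIntegers.isPrincipalIdealRing_of_abs_discr_lt (hdisc.trans_le ?_)
  refine pow_le_pow_left₀ Real.pi_pos.le ?_ 2
  rw [hK, Nat.factorial_two]
  push_cast
  linarith

section GoldenField

variable {K : Type*} [Field K] [NumberField K]

lemma isPrincipalIdealRing_of_quadraticAlgebra_algEquiv {a b : ℤ} (h : |b ^ 2 + 4 * a| ≤ 9)
    (e : QuadraticAlgebra ℤ a b ≃ₐ[ℤ] 𝓞 K) : IsPrincipalIdealRing (𝓞 K) := by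
  refine isPrincipalIdealRing_of_finrank_eq_two_of_abs_discr_lt ?_ ?_
  · rw [← RingOfIntegers.rank, ← e.toLinearEquiv.finrank_eq, QuadraticAlgebra.finrank_eq_two]
  · have h9 : ((|discr K| : ℤ) : ℝ) ≤ 9 := by
      rw [discr_eq_of_quadraticAlgebra_algEquiv e]
      exact_mod_cast h
    nlinarith [Real.pi_gt_three]

variable {θ l : 𝓞 K}

lemma exists_goldenInt_algEquiv (hθ : θ * θ = 1 + θ)
    (hgen : IntermediateField.adjoin ℚ {(θ : K)} = ⊤) : ∃ e : GoldenInt ≃ₐ[ℤ] 𝓞 K, e ω = θ :=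
  exists_algEquiv_ringOfIntegers (Prime.squarefree (by norm_num)) one_ne_zero (by simpa using hθ)
    hgen

lemma re_pos_and_norm_pos_of_totallyPositive (hθ : θ * θ = 1 + θ)
    (hgen : IntermediateField.adjoin ℚ {(θ : K)} = ⊤) {e : GoldenInt ≃ₐ[ℤ] 𝓞 K} (he : e ω = θ)
    {z : GoldenInt} (hpos : ∀ φ : K →+* ℝ, 0 < φ (e z)) : 0 < z.re ∧ 0 < z.norm := by
  have hez : e z = z.re + z.im * θ := by
    simpa [he] using quadraticAlgebra_algHom_apply (e : GoldenInt →ₐ[ℤ] 𝓞 K) z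
  have hconj {x : ℝ} (hx : x ^ 2 = x + 1) : 0 < z.re + z.im * x := by
    obtain ⟨φ, rfl⟩ := exists_ringHom_apply_eq (a := 1) (x := x)
      (Prime.squarefree (by norm_num)) one_ne_zero
      (by simpa using congrArg (algebraMap (𝓞 K) K) hθ) hgen
      (by rw [← sq, hx, Int.cast_one, add_comm])
    simpa [hez] using hpos φ
  have hφ := hconj Real.goldenRatio_sq
  have hψ := hconj Real.goldenConj_sq
  exact ⟨GoldenInt.re_pos_of_conj_pos hφ hψ, GoldenInt.norm_pos_of_conj_pos hφ hψ⟩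

lemma not_dvd_sq_sub_of_totallyPositive (hθ : θ * θ = 1 + θ)
    (hgen : IntermediateField.adjoin ℚ {(θ : K)} = ⊤) (hpos : ∀ φ : K →+* ℝ, 0 < φ l)
    (h4 : 4 ∣ l + 1) (x : 𝓞 K) : ¬ l ∣ x ^ 2 - θ := by
  obtain ⟨e, he⟩ := exists_goldenInt_algEquiv hθ hgen
  obtain ⟨z, rfl⟩ := e.surjective l
  obtain ⟨y, rfl⟩ := e.surjective x
  obtain ⟨hre, hnorm⟩ := re_pos_and_norm_pos_of_totallyPositive hθ hgen he hpos
  have hz4 : 4 ∣ z + 1 := by rwa [← map_dvd_iff e, map_add, map_one, map_ofNat]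
  rw [← he, ← map_pow, ← map_sub, map_dvd_iff e]
  exact GoldenInt.not_dvd_sq_sub_omega hre hnorm hz4 y

lemma exists_dvd_sq_add_one_of_irreducible (hθ : θ * θ = 1 + θ)
    (hgen : IntermediateField.adjoin ℚ {(θ : K)} = ⊤) (hl : Irreducible l)
    (hpos : ∀ φ : K →+* ℝ, 0 < φ l) (h4 : 4 ∣ l + 1) : ∃ x, l ∣ x ^ 2 + 1 := by
  obtain ⟨e, he⟩ := exists_goldenInt_algEquiv hθ hgen
  have := isPrincipalIdealRing_of_quadraticAlgebra_algEquiv (by norm_num) e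
  refine exists_dvd_sq_add_one_of_prime hl.prime ?_
  obtain ⟨z, rfl⟩ := e.surjective l
  have hnorm := (re_pos_and_norm_pos_of_totallyPositive hθ hgen he hpos).2
  have hz4 : 4 ∣ z + 1 := by rwa [← map_dvd_iff e, map_add, map_one, map_ofNat]
  have hmod : z.norm % 4 = 1 := GoldenInt.norm_modEq_one_of_four_dvd_add_one hz4
  rw [Algebra.norm_eq_of_algEquiv, algebraNorm_quadraticAlgebra]
  omega

end GoldenField

lemma adjoin_simple_eq_top_of_sq_eq_discr {F K : Type*} [Field F] [Field K] [Algebra F K]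
    {a b : F} {s θ : K} (hs : s ^ 2 = algebraMap F K (b ^ 2 + 4 * a))
    (hgen : IntermediateField.adjoin F {s} = ⊤) (hθ : θ * θ = a • (1 : K) + b • θ) :
    IntermediateField.adjoin F {θ} = ⊤ := by
  have hsq : s ^ 2 = (2 * θ - algebraMap F K b) ^ 2 := by
    simp only [Algebra.smul_def] at hθ
    rw [hs, map_add, map_mul, map_pow, map_ofNat]
    linear_combination -4 * hθ
  have hmem : 2 * θ - algebraMap F K b ∈ IntermediateField.adjoin F {θ} :=
    sub_mem (mul_mem (ofNat_mem _ 2) (IntermediateField.mem_adjoin_simple_self F θ))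
      (IntermediateField.algebraMap_mem _ b)
  rw [← top_le_iff, ← hgen, IntermediateField.adjoin_simple_le_iff]
  rcases sq_eq_sq_iff_eq_or_eq_neg.1 hsq with rfl | rfl
  · exact hmem
  · exact neg_mem hmem

lemma mul_self_eq_one_add_of_algebraMap_eq {K : Type*} [Field K] [CharZero K] {s : K}
    (h5 : s ^ 2 = 5) {θ : 𝓞 K} (hθ : algebraMap (𝓞 K) K θ = (1 + s) / 2) : θ * θ = 1 + θ := by
  apply RingOfIntegers.coe_injective
  rw [map_mul, map_add, map_one, hθ]
  linear_combination h5 / 4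

lemma adjoin_coe_eq_top_of_mul_self_eq_one_add {K : Type*} [Field K] [CharZero K] {s : K}
    (h5 : s ^ 2 = 5) (hgen : IntermediateField.adjoin ℚ {s} = ⊤) {θ : 𝓞 K}
    (hθ : θ * θ = 1 + θ) : IntermediateField.adjoin ℚ {(θ : K)} = ⊤ := by
  refine adjoin_simple_eq_top_of_sq_eq_discr (a := 1) (b := 1) ?_ hgen ?_
  · rw [h5]
    norm_num
  · simpa using congrArg (algebraMap (𝓞 K) K) hθ

theorem residue_symbols_of_units_sqrt5_general
    (F₀ : Type*) [Field F₀] [NumberField F₀]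
    (sq5 : F₀) (h5 : sq5 ^ 2 = 5)
    (hgen : IntermediateField.adjoin ℚ {sq5} = ⊤)
    (u uτ : 𝓞 F₀)
    (hu : algebraMap (𝓞 F₀) F₀ u = (1 + sq5) / 2)
    (huτ : algebraMap (𝓞 F₀) F₀ uτ = (1 - sq5) / 2)
    (lam : 𝓞 F₀)
    (hpos : ∀ φ : F₀ →+* ℝ, 0 < φ (algebraMap (𝓞 F₀) F₀ lam))
    (hcong : ∃ u₀ : (𝓞 F₀)ˣ,
        (∀ φ : F₀ →+* ℝ, 0 < φ (algebraMap (𝓞 F₀) F₀ ↑u₀)) ∧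
        (4 : 𝓞 F₀) ∣ ((↑u₀ : 𝓞 F₀) * lam + 1)) :
    (Irreducible lam → ∃ X : 𝓞 F₀, lam ∣ (X ^ 2 + 1)) ∧
    (¬ ∃ X : 𝓞 F₀, lam ∣ (X ^ 2 - u)) ∧
    (¬ ∃ X : 𝓞 F₀, lam ∣ (X ^ 2 - uτ)) := by
  obtain ⟨u₀, hu₀, h4⟩ := hcong
  have hpos' (φ : F₀ →+* ℝ) : 0 < φ (algebraMap (𝓞 F₀) F₀ (u₀ * lam)) := by
    rw [map_mul, map_mul]
    exact mul_pos (hu₀ φ) (hpos φ)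
  have hu_sq : u * u = 1 + u := mul_self_eq_one_add_of_algebraMap_eq h5 hu
  have huτ_sq : uτ * uτ = 1 + uτ :=
    mul_self_eq_one_add_of_algebraMap_eq ((neg_sq sq5).trans h5) (by rw [huτ, sub_eq_add_neg])
  have hu_gen := adjoin_coe_eq_top_of_mul_self_eq_one_add h5 hgen hu_sq
  have huτ_gen := adjoin_coe_eq_top_of_mul_self_eq_one_add h5 hgen huτ_sq
  simp only [← Units.mul_left_dvd (u := u₀) (a := lam), not_exists]
  exact ⟨fun hirr ↦ exists_dvd_sq_add_one_of_irreducible hu_sq hu_gen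
      ((irreducible_units_mul u₀).2 hirr) hpos' h4,
    not_dvd_sq_sub_of_totallyPositive hu_sq hu_gen hpos' h4,
    not_dvd_sq_sub_of_totallyPositive huτ_sq huτ_gen hpos' h4⟩

set_option synthInstance.maxHeartbeats 1000000 in
/-- Let `F₀ = ℚ(√5)`, `u = (1+√5)/2`, and `λ ∈ 𝓞 F₀` irreducible, totally
positive, coprime to `2√5`, with `u₀·λ ≡ −1 mod 4·𝓞 F₀` for some totally
positive unit `u₀`.  Then `(−1/λ) = 1`, `(u/λ) = −1`, and `(u^τ/λ) = −1`
(for `λ` prime the symbol is `1` exactly when the argument is a square modulo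
`λ`), where `u^τ = (1−√5)/2` and `τ` generates `Gal(F₀/ℚ)`. -/
theorem residue_symbols_of_units_sqrt5
    (F₀ : Type*) [Field F₀] [NumberField F₀]
    (sq5 : F₀) (h5 : sq5 ^ 2 = 5)
    (hgen : IntermediateField.adjoin ℚ {sq5} = ⊤)
    (s5 u uτ : 𝓞 F₀)
    (hs5 : algebraMap (𝓞 F₀) F₀ s5 = sq5)
    (hu : algebraMap (𝓞 F₀) F₀ u = (1 + sq5) / 2)
    (huτ : algebraMap (𝓞 F₀) F₀ uτ = (1 - sq5) / 2)
    (lam : 𝓞 F₀) (hirr : Irreducible lam)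
    (hpos : ∀ φ : F₀ →+* ℝ, 0 < φ (algebraMap (𝓞 F₀) F₀ lam))
    (hcop : IsCoprime lam (2 * s5))
    (hcong : ∃ u₀ : (𝓞 F₀)ˣ,
        (∀ φ : F₀ →+* ℝ, 0 < φ (algebraMap (𝓞 F₀) F₀ ↑u₀)) ∧
        (4 : 𝓞 F₀) ∣ ((↑u₀ : 𝓞 F₀) * lam + 1)) :
    -- `(−1/λ) = 1`: `−1` is a square modulo `λ`
    (∃ X : 𝓞 F₀, lam ∣ (X ^ 2 + 1)) ∧
    -- `(u/λ) = −1`: `u` is not a square modulo `λ`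
    (¬ ∃ X : 𝓞 F₀, lam ∣ (X ^ 2 - u)) ∧
    -- `(u^τ/λ) = −1`: `u^τ` is not a square modulo `λ`
    (¬ ∃ X : 𝓞 F₀, lam ∣ (X ^ 2 - uτ)) :=
  have ⟨h, hu_nonres, huτ_nonres⟩ := residue_symbols_of_units_sqrt5_general
    F₀ sq5 h5 hgen u uτ hu huτ lam hpos hcong
  ⟨h hirr, hu_nonres, huτ_nonres⟩
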